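/- For every integer q ≥ 1 and every ε > 0 there exists a bijection H : ℝ² → ℝ² such that: (i) H and H⁻¹ are C^∞; (ii) H preserves the 2-dimensional Lebesgue measure; (iii) H(x + 1/q, y) = H(x, y) + (1/q, 0) for all (x, y) ∈ ℝ² (so H is the lift of a map of the cylinder (ℝ/ℤ)×ℝ commuting with the rotation by 1/q); (iv) there exists δ > 0 such that H(x, y) = (x, y) whenever |y| ≥ 1 − δ; and (v) for every y ∈ [−1+ε, 1−ε] and every function φ : ℝ² → ℝ that is 1-Lipschitz and satisfies φ(x+1, y) = φ(x, y) for all (x,y), one has |∫₀¹ φ(H(t, y)) dt − (1/2)∫_{−1}^{1} ∫₀¹ φ(t, s) dt ds| ≤ ε. (Lemma 3.1: a smooth symplectomorphism of the cylinder, compactly supported in the interior, commuting with R_{1/q}, sending horizontal circle measures ε-close to the area measure in the Kantorovich distance.) -/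

import Mathlib

open MeasureTheory

/-- The Euclidean distance on the plane `ℝ × ℝ`. -/
noncomputable def euclDist (a b : ℝ × ℝ) : ℝ :=
  Real.sqrt ((a.1 - b.1) ^ 2 + (a.2 - b.2) ^ 2)

section helpers

open MeasureTheory Filter Topology Set

lemma det_pair (L : ℝ × ℝ →L[ℝ] ℝ × ℝ) :
    L.det = (L (1, 0)).1 * (L (0, 1)).2 - (L (0, 1)).1 * (L (1, 0)).2 := by
  have h := LinearMap.det_toMatrix (Module.Basis.finTwoProd ℝ) (L : ℝ × ℝ →ₗ[ℝ] ℝ × ℝ)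
  rw [ContinuousLinearMap.det, ← h, Matrix.det_fin_two]
  simp [LinearMap.toMatrix_apply]

/-- the profile function -/
noncomputable def prof (x : ℝ) : ℝ := (2 / Real.pi) * (Real.arcsin x + x * Real.sqrt (1 - x ^ 2))

lemma sub_pos_of_Ioo {x : ℝ} (hx : x ∈ Ioo (-1 : ℝ) 1) : 0 < 1 - x ^ 2 := by
  nlinarith [hx.1, hx.2]

lemma prof_hasDerivAt {x : ℝ} (hx : x ∈ Ioo (-1 : ℝ) 1) :
    HasDerivAt prof ((4 / Real.pi) * Real.sqrt (1 - x ^ 2)) x := by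
  have h0 := sub_pos_of_Ioo hx
  have h1 := Real.hasDerivAt_arcsin (x := x) hx.1.ne' hx.2.ne
  have h2 : HasDerivAt (fun x : ℝ => 1 - x ^ 2) (-(2 * x)) x := by
    simpa using (hasDerivAt_pow 2 x).const_sub 1
  have h3 := h2.sqrt h0.ne'
  have h4 := (h1.add ((hasDerivAt_id x).mul h3)).const_mul (2 / Real.pi)
  refine h4.congr_deriv ?_
  have hs := Real.sqrt_pos.2 h0
  have hsq := Real.sq_sqrt h0.le
  have hpi := Real.pi_pos
  simp only [id]
  field_simp
  nlinarith

lemma prof_contDiffAt {x : ℝ} (hx : x ∈ Ioo (-1 : ℝ) 1) : ContDiffAt ℝ (⊤ : ℕ∞) prof x := by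
  have h0 := sub_pos_of_Ioo hx
  have h1 := Real.contDiffAt_arcsin (x := x) hx.1.ne' hx.2.ne (n := (⊤ : ℕ∞))
  have h2 : ContDiffAt ℝ (⊤ : ℕ∞) (fun x : ℝ => Real.sqrt (1 - x ^ 2)) x :=
    ContDiffAt.sqrt (by fun_prop) h0.ne'
  exact contDiffAt_const.mul (h1.add (contDiffAt_id.mul h2))

lemma prof_continuous : Continuous prof := by
  unfold prof
  have := Real.continuous_arcsin
  fun_prop

lemma prof_strictMono : StrictMonoOn prof (Icc (-1) 1) := by
  apply strictMonoOn_of_deriv_pos (convex_Icc _ _) prof_continuous.continuousOn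
  intro x hx
  rw [interior_Icc] at hx
  rw [(prof_hasDerivAt hx).deriv]
  have := Real.sqrt_pos.2 (sub_pos_of_Ioo hx)
  have := Real.pi_pos
  positivity

lemma prof_one : prof 1 = 1 := by
  have := Real.pi_pos
  simp [prof]

lemma prof_neg (x : ℝ) : prof (-x) = - prof x := by
  simp [prof, Real.arcsin_neg]; ring

lemma prof_maps {x : ℝ} (hx : x ∈ Ioo (-1 : ℝ) 1) : prof x ∈ Ioo (-1 : ℝ) 1 := by
  constructor
  · have := prof_strictMono (a := -1) (by simp) (Ioo_subset_Icc_self hx) hx.1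
    rwa [prof_neg, prof_one] at this
  · have := prof_strictMono (b := 1) (Ioo_subset_Icc_self hx) (by simp) hx.2
    rwa [prof_one] at this

lemma prof_surj {X : ℝ} (hX : X ∈ Ioo (-1 : ℝ) 1) : ∃ x ∈ Ioo (-1 : ℝ) 1, prof x = X := by
  have h := intermediate_value_Ioo (f := prof) (a := -1) (b := 1) (by norm_num)
    prof_continuous.continuousOn
  rw [prof_neg, prof_one] at h
  exact h hX

noncomputable def profInv : ℝ → ℝ := Function.invFunOn prof (Ioo (-1) 1)

lemma profInv_mem {X : ℝ} (hX : X ∈ Ioo (-1 : ℝ) 1) : profInv X ∈ Ioo (-1 : ℝ) 1 :=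
  Function.invFunOn_mem (prof_surj hX)

lemma prof_profInv {X : ℝ} (hX : X ∈ Ioo (-1 : ℝ) 1) : prof (profInv X) = X :=
  Function.invFunOn_eq (prof_surj hX)

lemma prof_injOn : InjOn prof (Ioo (-1) 1) :=
  (prof_strictMono.mono Ioo_subset_Icc_self).injOn

lemma profInv_prof {x : ℝ} (hx : x ∈ Ioo (-1 : ℝ) 1) : profInv (prof x) = x :=
  prof_injOn (profInv_mem (prof_maps hx)) hx (prof_profInv (prof_maps hx))

lemma profInv_contDiffAt {X : ℝ} (hX : X ∈ Ioo (-1 : ℝ) 1) :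
    ContDiffAt ℝ (⊤ : ℕ∞) profInv X := by
  obtain ⟨x, hx, rfl⟩ := prof_surj hX
  have hne : (4 / Real.pi) * Real.sqrt (1 - x ^ 2) ≠ 0 := by
    have := Real.sqrt_pos.2 (sub_pos_of_Ioo hx)
    have := Real.pi_pos
    positivity
  have hd := (prof_hasDerivAt hx).hasFDerivAt_equiv hne
  have hc := prof_contDiffAt hx
  have hn : ((⊤ : ℕ∞) : WithTop ℕ∞) ≠ 0 := by simp
  have h1 := hc.to_localInverse hd hn
  refine h1.congr_of_eventuallyEq ?_
  refine (hc.hasStrictFDerivAt' hd hn).localInverse_unique ?_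
  filter_upwards [isOpen_Ioo.mem_nhds hx] with z hz using profInv_prof hz

/-- twist of the plane by the angle `θ (x^2+y^2)` -/
noncomputable def tw (θ : ℝ → ℝ) (p : ℝ × ℝ) : ℝ × ℝ :=
  (Real.cos (θ (p.1 ^ 2 + p.2 ^ 2)) * p.1 - Real.sin (θ (p.1 ^ 2 + p.2 ^ 2)) * p.2,
   Real.sin (θ (p.1 ^ 2 + p.2 ^ 2)) * p.1 + Real.cos (θ (p.1 ^ 2 + p.2 ^ 2)) * p.2)

lemma tw_norm (θ : ℝ → ℝ) (p : ℝ × ℝ) : (tw θ p).1 ^ 2 + (tw θ p).2 ^ 2 = p.1 ^ 2 + p.2 ^ 2 := by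
  have := Real.sin_sq_add_cos_sq (θ (p.1 ^ 2 + p.2 ^ 2))
  simp only [tw]
  linear_combination (p.1 ^ 2 + p.2 ^ 2) * this

lemma tw_inv (θ : ℝ → ℝ) (p : ℝ × ℝ) : tw (fun s => - θ s) (tw θ p) = p := by
  have h := tw_norm θ p
  have := Real.sin_sq_add_cos_sq (θ (p.1 ^ 2 + p.2 ^ 2))
  rw [tw, h]
  simp only [tw, Real.cos_neg, Real.sin_neg]
  ext
  · simp only; linear_combination p.1 * this
  · simp only; linear_combination p.2 * this

lemma tw_contDiff {θ : ℝ → ℝ} (hθ : ContDiff ℝ (⊤ : ℕ∞) θ) : ContDiff ℝ (⊤ : ℕ∞) (tw θ) := by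
  unfold tw
  fun_prop

lemma tw_det {θ : ℝ → ℝ} (hθ : ContDiff ℝ (⊤ : ℕ∞) θ) (p : ℝ × ℝ) :
    (fderiv ℝ (tw θ) p).det = 1 := by
  obtain ⟨x, y⟩ := p
  have h1 : HasFDerivAt (fun p : ℝ × ℝ => p.1) (ContinuousLinearMap.fst ℝ ℝ ℝ) (x, y) :=
    hasFDerivAt_fst
  have h2 : HasFDerivAt (fun p : ℝ × ℝ => p.2) (ContinuousLinearMap.snd ℝ ℝ ℝ) (x, y) :=
    hasFDerivAt_snd
  have hs := (h1.pow 2).add (h2.pow 2)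
  have ht : HasDerivAt θ (deriv θ (x ^ 2 + y ^ 2)) (x ^ 2 + y ^ 2) :=
    (hθ.differentiable (by simp) _).hasDerivAt
  have hθs := HasDerivAt.comp_hasFDerivAt (x, y) (f := fun p : ℝ × ℝ => p.1 ^ 2 + p.2 ^ 2) ht hs
  have hc := hθs.cos
  have hsn := hθs.sin
  have hA := (hc.mul h1).sub (hsn.mul h2)
  have hB := (hsn.mul h1).add (hc.mul h2)
  have hT : HasFDerivAt (tw θ) _ (x, y) := hA.prodMk hB
  rw [hT.fderiv, det_pair]
  have := Real.sin_sq_add_cos_sq (θ (x ^ 2 + y ^ 2))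
  simp
  linear_combination this

/-- area preserving smooth diffeomorphisms of the plane -/
structure Nice (T : Equiv.Perm (ℝ × ℝ)) : Prop where
  cd : ContDiff ℝ (⊤ : ℕ∞) T
  cds : ContDiff ℝ (⊤ : ℕ∞) T.symm
  det : ∀ p, (fderiv ℝ T p).det = 1

lemma det_comp_clm (A B : ℝ × ℝ →L[ℝ] ℝ × ℝ) : (A.comp B).det = A.det * B.det := by
  simp [ContinuousLinearMap.det]

lemma Nice.one : Nice 1 := by
  refine ⟨contDiff_id, contDiff_id, fun p => ?_⟩
  have : fderiv ℝ (⇑(1 : Equiv.Perm (ℝ × ℝ))) p = ContinuousLinearMap.id ℝ _ := fderiv_id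
  rw [this]; simp [det_pair]

lemma Nice.mul {S T : Equiv.Perm (ℝ × ℝ)} (hS : Nice S) (hT : Nice T) : Nice (S * T) := by
  refine ⟨hS.cd.comp hT.cd, hT.cds.comp hS.cds, fun p => ?_⟩
  have h := fderiv_comp (𝕜 := ℝ) p (hS.cd.differentiable (by simp) (T p))
    (hT.cd.differentiable (by simp) p)
  have h' : fderiv ℝ (⇑(S * T)) p = _ := h
  rw [h', det_comp_clm, hS.det, hT.det, one_mul]

lemma Nice.measurePreserving {T : Equiv.Perm (ℝ × ℝ)} (hT : Nice T) :
    MeasurePreserving T volume volume := by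
  have key : ∀ s, MeasurableSet s → volume (T '' s) = volume s := by
    intro s hs
    have := lintegral_abs_det_fderiv_eq_addHaar_image (s := s) (f := T) (f' := fderiv ℝ T)
      (volume : Measure (ℝ × ℝ)) hs
      (fun x _ => (hT.cd.differentiable (by simp) x).hasFDerivAt.hasFDerivWithinAt)
      T.injective.injOn
    rw [← this]
    simp [hT.det]
  refine ⟨hT.cd.continuous.measurable, ?_⟩
  ext s hs
  rw [Measure.map_apply hT.cd.continuous.measurable hs]
  have h3 := key (T ⁻¹' s) (hT.cd.continuous.measurable hs)
  rw [← h3, Equiv.image_preimage]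

section box
variable (a b w h : ℝ)

noncomputable def Phi (p : ℝ × ℝ) : ℝ × ℝ :=
  (a + w * prof p.1, b + h * (p.2 / Real.sqrt (1 - p.1 ^ 2)))

noncomputable def PhiInv (P : ℝ × ℝ) : ℝ × ℝ :=
  (profInv ((P.1 - a) / w),
    (P.2 - b) / h * Real.sqrt (1 - (profInv ((P.1 - a) / w)) ^ 2))

def Disc : Set (ℝ × ℝ) := {p | p.1 ^ 2 + p.2 ^ 2 < 1}

def Box : Set (ℝ × ℝ) := {P | (P.1 - a) / w ∈ Ioo (-1 : ℝ) 1 ∧ (P.2 - b) / h ∈ Ioo (-1 : ℝ) 1}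

variable {a b w h}

lemma Disc_fst {p : ℝ × ℝ} (hp : p ∈ Disc) : p.1 ∈ Ioo (-1 : ℝ) 1 := by
  have : p.1 ^ 2 + p.2 ^ 2 < 1 := hp
  constructor <;> nlinarith [sq_nonneg p.2]

lemma isOpen_Disc : IsOpen Disc := isOpen_lt (by fun_prop) (by fun_prop)

lemma isOpen_Box : IsOpen (Box a b w h) :=
  (isOpen_Ioo.preimage (by fun_prop : Continuous fun P : ℝ × ℝ => (P.1 - a) / w)).inter
    (isOpen_Ioo.preimage (by fun_prop : Continuous fun P : ℝ × ℝ => (P.2 - b) / h))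

lemma Phi_mem (hw : 0 < w) (hh : 0 < h) {p : ℝ × ℝ} (hp : p ∈ Disc) :
    Phi a b w h p ∈ Box a b w h := by
  have h1 := Disc_fst hp
  have h0 := sub_pos_of_Ioo h1
  have hs := Real.sqrt_pos.2 h0
  have hp' : p.1 ^ 2 + p.2 ^ 2 < 1 := hp
  have e1 : (a + w * prof p.1 - a) / w = prof p.1 := by field_simp; ring
  have e2 : (b + h * (p.2 / Real.sqrt (1 - p.1 ^ 2)) - b) / h = p.2 / Real.sqrt (1 - p.1 ^ 2) := by
    rw [add_sub_cancel_left, mul_div_cancel_left₀ _ hh.ne']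
  refine ⟨?_, ?_⟩
  · simp only [Phi]; rw [e1]; exact prof_maps h1
  · simp only [Phi]; rw [e2]
    have h3 : |p.2| < Real.sqrt (1 - p.1 ^ 2) := by
      apply Real.lt_sqrt_of_sq_lt
      rw [sq_abs]; linarith
    rw [abs_lt] at h3
    constructor
    · rw [lt_div_iff₀ hs]; linarith
    · rw [div_lt_iff₀ hs]; linarith

lemma PhiInv_Phi (hw : 0 < w) (hh : 0 < h) {p : ℝ × ℝ} (hp : p ∈ Disc) :
    PhiInv a b w h (Phi a b w h p) = p := by
  have h1 := Disc_fst hp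
  have h0 := sub_pos_of_Ioo h1
  have hs := Real.sqrt_pos.2 h0
  have e1 : (a + w * prof p.1 - a) / w = prof p.1 := by
    rw [add_sub_cancel_left, mul_div_cancel_left₀ _ hw.ne']
  have e2 : (b + h * (p.2 / Real.sqrt (1 - p.1 ^ 2)) - b) / h = p.2 / Real.sqrt (1 - p.1 ^ 2) := by
    rw [add_sub_cancel_left, mul_div_cancel_left₀ _ hh.ne']
  simp only [PhiInv, Phi]
  rw [e1, e2, profInv_prof h1, div_mul_cancel₀ _ hs.ne']

lemma PhiInv_normsq {P : ℝ × ℝ} (hP : P ∈ Box a b w h) :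
    (PhiInv a b w h P).1 ^ 2 + (PhiInv a b w h P).2 ^ 2 =
      1 - (1 - (profInv ((P.1 - a) / w)) ^ 2) * (1 - ((P.2 - b) / h) ^ 2) := by
  have h0 := sub_pos_of_Ioo (profInv_mem hP.1)
  simp only [PhiInv, mul_pow]
  rw [Real.sq_sqrt h0.le]
  ring

lemma PhiInv_mem {P : ℝ × ℝ} (hP : P ∈ Box a b w h) : PhiInv a b w h P ∈ Disc := by
  have h0 := sub_pos_of_Ioo (profInv_mem hP.1)
  have h1 := sub_pos_of_Ioo hP.2
  show (PhiInv a b w h P).1 ^ 2 + (PhiInv a b w h P).2 ^ 2 < 1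
  rw [PhiInv_normsq hP]
  have := mul_pos h0 h1
  linarith

lemma Phi_PhiInv (hw : 0 < w) (hh : 0 < h) {P : ℝ × ℝ} (hP : P ∈ Box a b w h) :
    Phi a b w h (PhiInv a b w h P) = P := by
  have hs := Real.sqrt_pos.2 (sub_pos_of_Ioo (profInv_mem hP.1))
  simp only [PhiInv, Phi]
  rw [prof_profInv hP.1, mul_div_cancel_right₀ _ hs.ne', mul_div_cancel₀ _ hw.ne',
    mul_div_cancel₀ _ hh.ne']
  ext <;> simp

lemma Phi_contDiffAt {p : ℝ × ℝ} (hp : p ∈ Disc) : ContDiffAt ℝ (⊤ : ℕ∞) (Phi a b w h) p := by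
  have h1 := Disc_fst hp
  have h0 := sub_pos_of_Ioo h1
  have hs := Real.sqrt_pos.2 h0
  have hprof : ContDiffAt ℝ (⊤ : ℕ∞) (fun p : ℝ × ℝ => prof p.1) p :=
    (prof_contDiffAt h1).comp p contDiffAt_fst
  have hsq : ContDiffAt ℝ (⊤ : ℕ∞) (fun p : ℝ × ℝ => Real.sqrt (1 - p.1 ^ 2)) p :=
    ContDiffAt.sqrt (by fun_prop) h0.ne'
  exact (contDiffAt_const.add (contDiffAt_const.mul hprof)).prodMk
    (contDiffAt_const.add (contDiffAt_const.mul (contDiffAt_snd.div hsq hs.ne')))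

lemma PhiInv_contDiffAt {P : ℝ × ℝ} (hP : P ∈ Box a b w h) :
    ContDiffAt ℝ (⊤ : ℕ∞) (PhiInv a b w h) P := by
  have h0 := sub_pos_of_Ioo (profInv_mem hP.1)
  have hg : ContDiffAt ℝ (⊤ : ℕ∞) (fun P : ℝ × ℝ => profInv ((P.1 - a) / w)) P :=
    ContDiffAt.comp (g := profInv) (f := fun P : ℝ × ℝ => (P.1 - a) / w) P
      (profInv_contDiffAt hP.1) (by fun_prop)
  have hsq : ContDiffAt ℝ (⊤ : ℕ∞)
      (fun P : ℝ × ℝ => Real.sqrt (1 - (profInv ((P.1 - a) / w)) ^ 2)) P :=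
    ContDiffAt.sqrt (contDiffAt_const.sub (hg.pow 2)) h0.ne'
  have h3 : ContDiffAt ℝ (⊤ : ℕ∞) (fun P : ℝ × ℝ => (P.2 - b) / h) P := by fun_prop
  exact hg.prodMk (h3.mul hsq)

lemma Phi_det {p : ℝ × ℝ} (hp : p ∈ Disc) :
    (fderiv ℝ (Phi a b w h) p).det = w * h * (4 / Real.pi) := by
  have hx := Disc_fst hp
  have h0 := sub_pos_of_Ioo hx
  have hs := Real.sqrt_pos.2 h0
  have h1 : HasFDerivAt (fun p : ℝ × ℝ => p.1) (ContinuousLinearMap.fst ℝ ℝ ℝ) p :=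
    hasFDerivAt_fst
  have h2 : HasFDerivAt (fun p : ℝ × ℝ => p.2) (ContinuousLinearMap.snd ℝ ℝ ℝ) p :=
    hasFDerivAt_snd
  have hA := HasDerivAt.comp_hasFDerivAt p (f := fun p : ℝ × ℝ => p.1) (prof_hasDerivAt hx) h1
  have hsq : HasDerivAt (fun x : ℝ => (Real.sqrt (1 - x ^ 2))⁻¹)
      (deriv (fun x : ℝ => (Real.sqrt (1 - x ^ 2))⁻¹) p.1) p.1 := by
    apply DifferentiableAt.hasDerivAt
    have hq : DifferentiableAt ℝ (fun x : ℝ => Real.sqrt (1 - x ^ 2)) p.1 :=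
      DifferentiableAt.sqrt (f := fun x : ℝ => 1 - x ^ 2) (by fun_prop) h0.ne'
    exact hq.inv hs.ne'
  have hB := h2.mul (HasDerivAt.comp_hasFDerivAt p (f := fun p : ℝ × ℝ => p.1) hsq h1)
  have hT : HasFDerivAt (Phi a b w h) _ p :=
    ((hA.const_mul w).const_add a).prodMk ((hB.const_mul h).const_add b)
  rw [hT.fderiv, det_pair]
  simp
  field_simp

open Classical in
noncomputable def boxMap (a b w h : ℝ) (θ : ℝ → ℝ) (P : ℝ × ℝ) : ℝ × ℝ :=
  if P ∈ Box a b w h then Phi a b w h (tw θ (PhiInv a b w h P)) else P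

lemma tw_mem {θ : ℝ → ℝ} {p : ℝ × ℝ} (hp : p ∈ Disc) : tw θ p ∈ Disc := by
  show (tw θ p).1 ^ 2 + (tw θ p).2 ^ 2 < 1
  rw [tw_norm]; exact hp

lemma boxMap_inv (hw : 0 < w) (hh : 0 < h) (θ : ℝ → ℝ) (P : ℝ × ℝ) :
    boxMap a b w h (fun s => - θ s) (boxMap a b w h θ P) = P := by
  by_cases hP : P ∈ Box a b w h
  · have h1 := PhiInv_mem hP
    have h2 := tw_mem (θ := θ) h1
    rw [boxMap, boxMap, if_pos hP, if_pos (Phi_mem hw hh h2), PhiInv_Phi hw hh h2, tw_inv,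
      Phi_PhiInv hw hh hP]
  · have : boxMap a b w h θ P = P := by rw [boxMap, if_neg hP]
    rw [this, boxMap, if_neg hP]

noncomputable def boxPerm (hw : 0 < w) (hh : 0 < h) (a b : ℝ) (θ : ℝ → ℝ) :
    Equiv.Perm (ℝ × ℝ) where
  toFun := boxMap a b w h θ
  invFun := boxMap a b w h (fun s => - θ s)
  left_inv := boxMap_inv hw hh θ
  right_inv P := by simpa using boxMap_inv (a := a) (b := b) hw hh (fun s => - θ s) P

lemma prof_abs (z : ℝ) : |prof z| = prof |z| := by
  have h0 : prof 0 = 0 := by simp [prof]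
  have key : ∀ z : ℝ, 0 ≤ z → 0 ≤ prof z := by
    intro z hz
    have := Real.arcsin_nonneg.2 hz
    have := Real.pi_pos
    unfold prof
    positivity
  rcases le_total 0 z with hz | hz
  · rw [abs_of_nonneg hz, abs_of_nonneg (key z hz)]
  · rw [abs_of_nonpos hz, prof_neg, abs_of_nonpos]
    have := key (-z) (by linarith)
    rw [prof_neg] at this; linarith

lemma boxMap_support {θ : ℝ → ℝ} {r : ℝ} (hr0 : 0 < r) (hr : r < 1)
    (hθ : ∀ s, r ≤ s → θ s = 0) (hw : 0 < w) (hh : 0 < h) :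
    ∃ ρ < 1, ∀ P : ℝ × ℝ, (ρ ≤ |(P.1 - a) / w| ∨ ρ ≤ |(P.2 - b) / h|) →
      boxMap a b w h θ P = P := by
  have hsr : Real.sqrt r < 1 := by
    rw [Real.sqrt_lt' one_pos]; simpa using hr
  have hsr0 := Real.sqrt_pos.2 hr0
  have hsI : Real.sqrt r ∈ Ioo (-1 : ℝ) 1 := ⟨by linarith, hsr⟩
  refine ⟨max (Real.sqrt r) (prof (Real.sqrt r)), max_lt hsr (prof_maps hsI).2, ?_⟩
  intro P hP'
  by_cases hP : P ∈ Box a b w h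
  swap
  · rw [boxMap, if_neg hP]
  have hg := profInv_mem hP.1
  have h1 := sub_pos_of_Ioo hg
  have h2 := sub_pos_of_Ioo hP.2
  have hge : r ≤ (PhiInv a b w h P).1 ^ 2 + (PhiInv a b w h P).2 ^ 2 := by
    rw [PhiInv_normsq hP]
    rcases hP' with hu | hv
    · have hu' := (le_max_right _ _).trans hu
      have : r ≤ (profInv ((P.1 - a) / w)) ^ 2 := by
        by_contra! hlt
        have h3 : |profInv ((P.1 - a) / w)| < Real.sqrt r := by
          apply Real.lt_sqrt_of_sq_lt; rwa [sq_abs]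
        have h4 := prof_strictMono (a := |profInv ((P.1 - a) / w)|) (b := Real.sqrt r)
          ⟨by linarith [abs_nonneg (profInv ((P.1 - a) / w))], by linarith⟩
          (Ioo_subset_Icc_self hsI) h3
        rw [← prof_abs, prof_profInv hP.1] at h4
        linarith
      nlinarith [sq_nonneg ((P.2 - b) / h)]
    · have hv' := (le_max_left _ _).trans hv
      have : r ≤ ((P.2 - b) / h) ^ 2 := by
        rw [← sq_abs, ← Real.sq_sqrt hr0.le]
        gcongr
      nlinarith [sq_nonneg (profInv ((P.1 - a) / w))]
  have htw : tw θ (PhiInv a b w h P) = PhiInv a b w h P := by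
    rw [tw, hθ _ hge]; simp
  rw [boxMap, if_pos hP, htw, Phi_PhiInv hw hh hP]

lemma boxMap_eventually_id {θ : ℝ → ℝ} {r : ℝ} (hr0 : 0 < r) (hr : r < 1)
    (hθ : ∀ s, r ≤ s → θ s = 0) (hw : 0 < w) (hh : 0 < h) {P : ℝ × ℝ} (hP : P ∉ Box a b w h) :
    boxMap a b w h θ =ᶠ[𝓝 P] id := by
  obtain ⟨ρ, hρ, hs⟩ := boxMap_support (a := a) (b := b) hr0 hr hθ hw hh
  have hopen : IsOpen {P : ℝ × ℝ | ρ < |(P.1 - a) / w| ∨ ρ < |(P.2 - b) / h|} :=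
    (isOpen_lt (f := fun _ : ℝ × ℝ => ρ) (g := fun P : ℝ × ℝ => |(P.1 - a) / w|)
      (by fun_prop) (by fun_prop)).union
    (isOpen_lt (f := fun _ : ℝ × ℝ => ρ) (g := fun P : ℝ × ℝ => |(P.2 - b) / h|)
      (by fun_prop) (by fun_prop))
  have hmem : P ∈ {P : ℝ × ℝ | ρ < |(P.1 - a) / w| ∨ ρ < |(P.2 - b) / h|} := by
    by_contra hcon
    simp only [mem_ofPred_eq, not_or, not_lt] at hcon
    exact hP ⟨abs_lt.1 (hcon.1.trans_lt hρ), abs_lt.1 (hcon.2.trans_lt hρ)⟩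
  filter_upwards [hopen.mem_nhds hmem] with z hz
  exact hs z (hz.imp le_of_lt le_of_lt)

lemma boxMap_eventually_in (θ : ℝ → ℝ) {P : ℝ × ℝ} (hP : P ∈ Box a b w h) :
    boxMap a b w h θ =ᶠ[𝓝 P] fun P => Phi a b w h (tw θ (PhiInv a b w h P)) := by
  filter_upwards [isOpen_Box.mem_nhds hP] with z hz
  rw [boxMap, if_pos hz]

lemma boxMap_contDiff {θ : ℝ → ℝ} {r : ℝ} (hr0 : 0 < r) (hr : r < 1)
    (hc : ContDiff ℝ (⊤ : ℕ∞) θ)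
    (hθ : ∀ s, r ≤ s → θ s = 0) (hw : 0 < w) (hh : 0 < h) :
    ContDiff ℝ (⊤ : ℕ∞) (boxMap a b w h θ) := by
  rw [contDiff_iff_contDiffAt]
  intro P
  by_cases hP : P ∈ Box a b w h
  · refine ContDiffAt.congr_of_eventuallyEq ?_ (boxMap_eventually_in θ hP)
    have h1 := PhiInv_contDiffAt hP
    have h2 := ((tw_contDiff hc).contDiffAt (x := PhiInv a b w h P)).comp P h1
    exact ContDiffAt.comp (g := Phi a b w h) (f := tw θ ∘ PhiInv a b w h) P
      (Phi_contDiffAt (p := tw θ (PhiInv a b w h P)) (tw_mem (PhiInv_mem hP))) h2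
  · exact contDiffAt_id.congr_of_eventuallyEq (boxMap_eventually_id hr0 hr hθ hw hh hP)

lemma boxPerm_nice {θ : ℝ → ℝ} {r : ℝ} (hr0 : 0 < r) (hr : r < 1)
    (hc : ContDiff ℝ (⊤ : ℕ∞) θ)
    (hθ : ∀ s, r ≤ s → θ s = 0) (hw : 0 < w) (hh : 0 < h) :
    Nice (boxPerm hw hh a b θ) := by
  have hcd := boxMap_contDiff (a := a) (b := b) hr0 hr hc hθ hw hh
  refine ⟨hcd, boxMap_contDiff hr0 hr hc.neg (fun s hs => by simp [hθ s hs]) hw hh, ?_⟩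
  intro P
  show (fderiv ℝ (boxMap a b w h θ) P).det = 1
  by_cases hP : P ∈ Box a b w h
  · have hp := PhiInv_mem hP
    have hPe := Phi_PhiInv hw hh hP
    set p := PhiInv a b w h P
    have hev : (boxMap a b w h θ) ∘ (Phi a b w h) =ᶠ[𝓝 p] (Phi a b w h) ∘ (tw θ) := by
      filter_upwards [isOpen_Disc.mem_nhds hp] with z hz
      simp only [Function.comp]
      rw [boxMap, if_pos (Phi_mem hw hh hz), PhiInv_Phi hw hh hz]
    have hfd := hev.fderiv_eq (𝕜 := ℝ)
    have dPhi : ∀ z ∈ Disc, DifferentiableAt ℝ (Phi a b w h) z := fun z hz =>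
      (Phi_contDiffAt hz).differentiableAt (by simp)
    rw [fderiv_comp p (hcd.differentiable (by simp) _) (dPhi p hp),
      fderiv_comp p (dPhi _ (tw_mem hp)) ((tw_contDiff hc).differentiable (by simp) _)] at hfd
    have hd := congrArg ContinuousLinearMap.det hfd
    rw [det_comp_clm, det_comp_clm, Phi_det hp, Phi_det (tw_mem hp), tw_det hc, hPe] at hd
    have hne : w * h * (4 / Real.pi) ≠ 0 := by
      have := Real.pi_pos
      positivity
    exact mul_right_cancel₀ hne (hd.trans (mul_comm _ _))
  · rw [(boxMap_eventually_id hr0 hr hθ hw hh hP).fderiv_eq, fderiv_id]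
    simp [det_pair]

end box

lemma exists_box (a b : ℝ) {w h η : ℝ} (hw : 0 < w) (hh : 0 < h) (hη : 0 < η) (hη1 : η < 1) :
    ∃ T : Equiv.Perm (ℝ × ℝ), Nice T ∧
      (∃ ρ < 1, ∀ x y : ℝ, (ρ * w ≤ |x - a| ∨ ρ * h ≤ |y - b|) → T (x, y) = (x, y)) ∧
      ∀ x y : ℝ, |x - a| ≤ (1 - η) * w → |y - b| ≤ (1 - η) * h → T (x, y) = (2 * a - x, 2 * b - y) := by
  have hηI : 1 - η ∈ Ioo (-1 : ℝ) 1 := ⟨by linarith, by linarith⟩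
  have hm := profInv_mem hηI
  have hpm := prof_profInv hηI
  set m := profInv (1 - η)
  have h1 := sub_pos_of_Ioo hm
  have h2 := sub_pos_of_Ioo hηI
  obtain ⟨r1, hr1⟩ : ∃ r1, r1 = 1 - (1 - m ^ 2) * (1 - (1 - η) ^ 2) := ⟨_, rfl⟩
  have hr1lt : r1 < 1 := by have := mul_pos h1 h2; linarith
  have hr10 : 0 ≤ r1 := by nlinarith [sq_nonneg m, sq_nonneg (1 - η)]
  obtain ⟨r2, hr2⟩ : ∃ r2, r2 = (1 + r1) / 2 := ⟨_, rfl⟩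
  obtain ⟨θ, hθd⟩ : ∃ θ : ℝ → ℝ,
    θ = fun s => Real.pi * Real.smoothTransition ((r2 - s) / (r2 - r1)) := ⟨_, rfl⟩
  have hr12 : 0 < r2 - r1 := by linarith
  have hc : ContDiff ℝ (⊤ : ℕ∞) θ := by
    rw [hθd]
    refine contDiff_const.mul (Real.smoothTransition.contDiff.comp ?_)
    fun_prop
  have hθ0 : ∀ s, r2 ≤ s → θ s = 0 := by
    intro s hs
    rw [hθd]
    simp only
    rw [Real.smoothTransition.zero_of_nonpos, mul_zero]
    exact div_nonpos_of_nonpos_of_nonneg (by linarith) hr12.le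
  have hθ1 : ∀ s, s ≤ r1 → θ s = Real.pi := by
    intro s hs
    rw [hθd]
    simp only
    rw [Real.smoothTransition.one_of_one_le, mul_one]
    rw [le_div_iff₀ hr12]; linarith
  have hr20 : 0 < r2 := by linarith
  have hr21 : r2 < 1 := by linarith
  refine ⟨boxPerm hw hh a b θ, boxPerm_nice hr20 hr21 hc hθ0 hw hh, ?_, ?_⟩
  · obtain ⟨ρ, hρ, hs⟩ := boxMap_support (a := a) (b := b) hr20 hr21 hθ0 hw hh
    refine ⟨ρ, hρ, fun x y hxy => hs (x, y) ?_⟩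
    simp only [abs_div, abs_of_pos hw, abs_of_pos hh]
    rwa [le_div_iff₀ hw, le_div_iff₀ hh]
  · intro x y hx hy
    have hu : |(x - a) / w| ≤ 1 - η := by
      rw [abs_div, abs_of_pos hw, div_le_iff₀ hw]; exact hx
    have hv : |(y - b) / h| ≤ 1 - η := by
      rw [abs_div, abs_of_pos hh, div_le_iff₀ hh]; exact hy
    have hP : (x, y) ∈ Box a b w h :=
      ⟨abs_lt.1 (by simp only; linarith), abs_lt.1 (by simp only; linarith)⟩
    have hg := profInv_mem hP.1
    have hgm : |profInv ((x - a) / w)| ≤ m := by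
      by_contra! hlt
      have h4 := prof_strictMono (b := |profInv ((x - a) / w)|) (a := m)
        (Ioo_subset_Icc_self hm) ⟨by linarith [hm.1], (abs_lt.2 hg).le⟩ hlt
      rw [← prof_abs, prof_profInv hP.1, hpm] at h4
      simp only at h4
      linarith
    have hle : (PhiInv a b w h (x, y)).1 ^ 2 + (PhiInv a b w h (x, y)).2 ^ 2 ≤ r1 := by
      rw [PhiInv_normsq hP, hr1]
      have e1 : (profInv ((x - a) / w)) ^ 2 ≤ m ^ 2 := by
        rw [← sq_abs]; gcongr
      have e2 : ((y - b) / h) ^ 2 ≤ (1 - η) ^ 2 := by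
        rw [← sq_abs]; gcongr
      simp only
      nlinarith
    have hPe := Phi_PhiInv hw hh hP
    show boxMap a b w h θ (x, y) = _
    rw [boxMap, if_pos hP, tw, hθ1 _ hle]
    have e1 := congrArg Prod.fst hPe
    have e2 := congrArg Prod.snd hPe
    simp only [Phi] at e1 e2
    simp only [Phi, Real.cos_pi, Real.sin_pi, zero_mul, neg_mul, one_mul, sub_zero, zero_add,
      prof_neg, neg_sq, neg_div]
    ext
    · simp only; linarith
    · simp only; linarith

lemma exists_column (x0 : ℝ) {W c η : ℝ} (hW : 0 < W) (hc0 : -1 < c) (hc1 : c < 1)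
    (hη : 0 < η) (hη1 : η < 1) :
    ∃ K : Equiv.Perm (ℝ × ℝ), Nice K ∧
      (∃ ρ > 0, ∀ x y : ℝ, (x ≤ x0 + ρ ∨ x0 + W - ρ ≤ x ∨ 1 - ρ ≤ |y|) → K (x, y) = (x, y)) ∧
      (∀ x y : ℝ, |x - (x0 + W / 2)| ≤ (1 - η) * (W / 2) → -1 + η ≤ y → y ≤ c - η →
        K (x, y) = (2 * x0 + W - x, c - 1 - y)) ∧
      (∀ x y : ℝ, |x - (x0 + W / 2)| ≤ (1 - η) * (W / 2) → c + η ≤ y → y ≤ 1 - η →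
        K (x, y) = (2 * x0 + W - x, c + 1 - y)) := by
  have hw : 0 < W / 2 := by linarith
  have hl : 0 < (c + 1) / 2 := by linarith
  have hh : 0 < (1 - c) / 2 := by linarith
  obtain ⟨A, hA, ⟨ra, hra, hAs⟩, hAr⟩ := exists_box (x0 + W / 2) ((c - 1) / 2) hw hl hη hη1
  obtain ⟨B, hB, ⟨rb, hrb, hBs⟩, hBr⟩ := exists_box (x0 + W / 2) ((c + 1) / 2) hw hh hη hη1
  -- outside versions
  have hAs' : ∀ x y : ℝ, (c + 1) / 2 ≤ |y - (c - 1) / 2| → A (x, y) = (x, y) := by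
    intro x y h
    apply hAs; right; nlinarith
  have hBs' : ∀ x y : ℝ, (1 - c) / 2 ≤ |y - (c + 1) / 2| → B (x, y) = (x, y) := by
    intro x y h
    apply hBs; right; nlinarith
  refine ⟨A * B, hA.mul hB, ?_, ?_, ?_⟩
  · obtain ⟨ρ, hρ0, h1, h2, h3, h4, h5, h6⟩ : ∃ ρ > 0, ρ ≤ (1 - ra) * (W / 2) ∧
        ρ ≤ (1 - rb) * (W / 2) ∧ ρ ≤ (1 - ra) * ((c + 1) / 2) ∧ ρ ≤ (1 - rb) * ((1 - c) / 2) ∧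
        ρ ≤ (c + 1) / 2 ∧ ρ ≤ (1 - c) / 2 := by
      have a1 : 0 < 1 - ra := by linarith
      have a2 : 0 < 1 - rb := by linarith
      refine ⟨min ((1 - ra) * (W / 2)) (min ((1 - rb) * (W / 2)) (min ((1 - ra) * ((c + 1) / 2))
        (min ((1 - rb) * ((1 - c) / 2)) (min ((c + 1) / 2) ((1 - c) / 2))))), ?_, ?_⟩
      · simp only [gt_iff_lt, lt_min_iff]
        exact ⟨by positivity, by positivity, by positivity, by positivity, hl, hh⟩
      · simp only [min_le_iff, le_refl, true_or, or_true, and_self]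
    refine ⟨ρ, hρ0, fun x y hxy => ?_⟩
    have eA : A (x, y) = (x, y) := by
      apply hAs
      rcases hxy with h | h | h
      · left; rw [le_abs]; right; linarith
      · left; rw [le_abs]; left; linarith
      · right
        rcases le_abs.1 h with h | h
        · rw [le_abs]; left; nlinarith
        · rw [le_abs]; right; linarith
    have eB : B (x, y) = (x, y) := by
      apply hBs
      rcases hxy with h | h | h
      · left; rw [le_abs]; right; linarith
      · left; rw [le_abs]; left; linarith
      · right
        rcases le_abs.1 h with h | h
        · rw [le_abs]; left; linarith
        · rw [le_abs]; right; nlinarith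
    rw [Equiv.Perm.mul_apply, eB, eA]
  · intro x y hx hy1 hy2
    rw [Equiv.Perm.mul_apply, hBs' x y (by rw [le_abs]; right; linarith), hAr x y hx]
    · ext <;> simp only <;> ring
    · rw [abs_le]; constructor <;> nlinarith
  · intro x y hx hy1 hy2
    rw [Equiv.Perm.mul_apply, hBr x y hx, hAs']
    · ext <;> simp only <;> ring
    · rw [le_abs]; left; linarith
    · rw [abs_le]; constructor <;> nlinarith

lemma exists_columns {p η : ℝ} {M : ℕ} (hp : 0 < p) (hη : 0 < η) (hη1 : η < 1) (hM : 1 ≤ M)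
    (n : ℕ) (hn : 1 ≤ n) (hnM : n ≤ M) :
    ∃ G : Equiv.Perm (ℝ × ℝ), Nice G ∧
      (∃ ρ > 0, ∀ x y : ℝ, (x ≤ p / M + ρ ∨ n * (p / M) - ρ ≤ x ∨ 1 - ρ ≤ |y|) →
        G (x, y) = (x, y)) ∧
      ∀ j : ℕ, 1 ≤ j → j < n → ∀ x y : ℝ,
        |x - (j * (p / M) + p / M / 2)| ≤ (1 - η) * (p / M / 2) → -1 + η ≤ y → y ≤ 1 - η →
        (y ≤ -1 + 2 * j / M - η →
          G (x, y) = (2 * (j * (p / M)) + p / M - x, -1 + 2 * j / M - 1 - y)) ∧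
        (-1 + 2 * j / M + η ≤ y →
          G (x, y) = (2 * (j * (p / M)) + p / M - x, -1 + 2 * j / M + 1 - y)) := by
  have hM0 : (0 : ℝ) < M := by exact_mod_cast hM
  have hW : 0 < p / M := by positivity
  induction n, hn using Nat.le_induction with
  | base =>
    exact ⟨1, Nice.one, ⟨1, one_pos, fun _ _ _ => rfl⟩, fun j h1 h2 => by omega⟩
  | succ n hn ih =>
    obtain ⟨G, hG, ⟨ρ, hρ, hs⟩, hr⟩ := ih (by omega)
    have hn' : (1 : ℝ) ≤ n := by exact_mod_cast hn
    have hnM' : (n : ℝ) + 1 ≤ M := by exact_mod_cast hnM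
    have hc0 : -1 < -1 + 2 * (n : ℝ) / M := by
      have : 0 < 2 * (n : ℝ) / M := by positivity
      linarith
    have hc1 : -1 + 2 * (n : ℝ) / M < 1 := by
      have : 2 * (n : ℝ) / M < 2 := by rw [div_lt_iff₀ hM0]; linarith
      linarith
    obtain ⟨K, hK, ⟨σ, hσ, ks⟩, kl, kh⟩ := exists_column (n * (p / M)) hW hc0 hc1 hη hη1
    refine ⟨K * G, hK.mul hG, ?_, ?_⟩
    · refine ⟨min ρ (min σ (p / M)), lt_min hρ (lt_min hσ hW), fun x y hxy => ?_⟩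
      have m1 : min ρ (min σ (p / M)) ≤ ρ := min_le_left _ _
      have m2 : min ρ (min σ (p / M)) ≤ σ := (min_le_right _ _).trans (min_le_left _ _)
      have m3 : min ρ (min σ (p / M)) ≤ p / M := (min_le_right _ _).trans (min_le_right _ _)
      push_cast at hxy
      rw [Equiv.Perm.mul_apply, hs, ks]
      · rcases hxy with h | h | h
        · left; linarith [le_mul_of_one_le_left hW.le hn']
        · right; left; linarith
        · right; right; linarith
      · rcases hxy with h | h | h
        · left; linarith
        · right; left; linarith
        · right; right; linarith
    · intro j hj1 hj2 x y hx hy1 hy2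
      have hηW : 0 < η * (p / M / 2) := by positivity
      rcases Nat.lt_succ_iff_lt_or_eq.1 hj2 with hjn | rfl
      · have hjn' : (j : ℝ) + 1 ≤ n := by exact_mod_cast hjn
        have hle : ((j : ℝ) + 1) * (p / M) ≤ n * (p / M) := by gcongr
        rw [abs_le] at hx
        have hx' : 2 * (j * (p / M)) + p / M - x ≤ n * (p / M) := by linarith
        obtain ⟨r1, r2⟩ := hr j hj1 hjn x y (abs_le.2 hx) hy1 hy2
        constructor
        · intro h
          rw [Equiv.Perm.mul_apply, r1 h, ks]
          left; linarith
        · intro h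
          rw [Equiv.Perm.mul_apply, r2 h, ks]
          left; linarith
      · have e : G (x, y) = (x, y) := by
          apply hs
          rw [abs_le] at hx
          right; left; linarith
        rw [Equiv.Perm.mul_apply, e]
        exact ⟨fun h => kl x y hx hy1 h, fun h => kh x y hx h hy2⟩

noncomputable def perMap (p : ℝ) (G : ℝ × ℝ → ℝ × ℝ) (z : ℝ × ℝ) : ℝ × ℝ :=
  G (z - ((⌊z.1 / p⌋ : ℝ) * p, 0)) + ((⌊z.1 / p⌋ : ℝ) * p, 0)

lemma perMap_of_mem {p : ℝ} (hp : 0 < p) (G : ℝ × ℝ → ℝ × ℝ) (z : ℝ × ℝ) (k : ℤ)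
    (h0 : k * p ≤ z.1) (h1 : z.1 < (k + 1) * p) :
    perMap p G z = G (z - (k * p, 0)) + (k * p, 0) := by
  have : ⌊z.1 / p⌋ = k := by
    rw [Int.floor_eq_iff]
    exact ⟨by rwa [le_div_iff₀ hp], by rwa [div_lt_iff₀ hp]⟩
  rw [perMap, this]

lemma floor_bounds {p : ℝ} (hp : 0 < p) (x : ℝ) :
    (⌊x / p⌋ : ℝ) * p ≤ x ∧ x < ((⌊x / p⌋ : ℝ) + 1) * p := by
  constructor
  · rw [← le_div_iff₀ hp]; exact Int.floor_le _
  · rw [← div_lt_iff₀ hp]; exact Int.lt_floor_add_one _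

lemma perMap_inv {p ρ : ℝ} (hp : 0 < p) (hρ : 0 < ρ) (G : Equiv.Perm (ℝ × ℝ))
    (hs : ∀ x y : ℝ, (x ≤ ρ ∨ p - ρ ≤ x) → G (x, y) = (x, y)) (z : ℝ × ℝ) :
    perMap p G.symm (perMap p G z) = z := by
  obtain ⟨h0, h1⟩ := floor_bounds hp z.1
  have hz := perMap_of_mem hp G z _ h0 h1
  set k := ⌊z.1 / p⌋
  set z' := z - ((k : ℝ) * p, (0 : ℝ)) with hz'
  have e1 : z'.1 = z.1 - k * p := rfl
  have hin : 0 ≤ (G z').1 ∧ (G z').1 < p := by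
    by_contra hcon
    have h2 : (G z').1 ≤ ρ ∨ p - ρ ≤ (G z').1 := by
      by_contra! h3
      exact hcon ⟨by linarith, by linarith⟩
    have h3 : G (G z') = G z' := hs (G z').1 (G z').2 h2
    have h4 := G.injective h3
    rw [h4] at hcon
    exact hcon ⟨by linarith, by linarith⟩
  rw [perMap_of_mem hp G.symm (perMap p G z) k, hz]
  · simp [hz']
  · rw [hz]; simp only [Prod.fst_add]; linarith
  · rw [hz]; simp only [Prod.fst_add]; linarith

lemma perMap_eventually {p ρ : ℝ} (hp : 0 < p) (hρ : 0 < ρ) (hρp : ρ ≤ p) (G : ℝ × ℝ → ℝ × ℝ)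
    (hs : ∀ x y : ℝ, (x ≤ ρ ∨ p - ρ ≤ x) → G (x, y) = (x, y)) (z : ℝ × ℝ) :
    ∃ v : ℝ × ℝ, perMap p G =ᶠ[𝓝 z] fun u => G (u - v) + v := by
  obtain ⟨h0, h1⟩ := floor_bounds hp z.1
  set k := ⌊z.1 / p⌋
  refine ⟨(k * p, 0), ?_⟩
  have hopen : IsOpen ((fun u : ℝ × ℝ => u.1) ⁻¹' Ioo (k * p - ρ) ((k + 1) * p)) :=
    isOpen_Ioo.preimage continuous_fst
  filter_upwards [hopen.mem_nhds ⟨by linarith, h1⟩] with u hu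
  obtain ⟨hu0, hu1⟩ := hu
  rcases le_or_gt (k * p) u.1 with h | h
  · exact perMap_of_mem hp G u k h hu1
  · rw [perMap_of_mem hp G u (k - 1) (by push_cast; linarith) (by push_cast; linarith)]
    have e1 := hs (u.1 - k * p) u.2 (by left; linarith)
    have e2 := hs (u.1 - ((k - 1 : ℤ) : ℝ) * p) u.2 (by right; push_cast; linarith)
    have e3 : u - (((k - 1 : ℤ) : ℝ) * p, (0 : ℝ)) = (u.1 - ((k - 1 : ℤ) : ℝ) * p, u.2) := by
      ext <;> simp
    have e4 : u - ((k : ℝ) * p, (0 : ℝ)) = (u.1 - (k : ℝ) * p, u.2) := by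
      ext <;> simp
    rw [e3, e4, e1, e2]
    ext <;> simp

lemma perMap_contDiff {p ρ : ℝ} (hp : 0 < p) (hρ : 0 < ρ) (hρp : ρ ≤ p) {G : ℝ × ℝ → ℝ × ℝ}
    (hG : ContDiff ℝ (⊤ : ℕ∞) G)
    (hs : ∀ x y : ℝ, (x ≤ ρ ∨ p - ρ ≤ x) → G (x, y) = (x, y)) :
    ContDiff ℝ (⊤ : ℕ∞) (perMap p G) := by
  rw [contDiff_iff_contDiffAt]
  intro z
  obtain ⟨v, hv⟩ := perMap_eventually hp hρ hρp G hs z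
  refine ContDiffAt.congr_of_eventuallyEq ?_ hv
  exact ((hG.comp (contDiff_id.sub contDiff_const)).add contDiff_const).contDiffAt

lemma exists_periodic {p ρ : ℝ} (hp : 0 < p) (hρ : 0 < ρ) (hρp : ρ ≤ p) {G : Equiv.Perm (ℝ × ℝ)}
    (hG : Nice G) (hs : ∀ x y : ℝ, (x ≤ ρ ∨ p - ρ ≤ x) → G (x, y) = (x, y)) :
    ∃ H : Equiv.Perm (ℝ × ℝ), Nice H ∧ ⇑H = perMap p G := by
  have hs' : ∀ x y : ℝ, (x ≤ ρ ∨ p - ρ ≤ x) → G.symm (x, y) = (x, y) := by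
    intro x y h
    rw [Equiv.symm_apply_eq, hs x y h]
  refine ⟨⟨perMap p G, perMap p G.symm, perMap_inv hp hρ G hs, perMap_inv hp hρ G.symm hs'⟩,
    ⟨perMap_contDiff hp hρ hρp hG.cd hs, perMap_contDiff hp hρ hρp hG.cds hs', fun z => ?_⟩, rfl⟩
  obtain ⟨v, hv⟩ := perMap_eventually hp hρ hρp G hs z
  show (fderiv ℝ (perMap p G) z).det = 1
  rw [hv.fderiv_eq, fderiv_add_const, fderiv_comp_sub, hG.det]

lemma perMap_add {p : ℝ} (hp : 0 < p) (G : ℝ × ℝ → ℝ × ℝ) (x y : ℝ) :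
    perMap p G (x + p, y) = perMap p G (x, y) + (p, 0) := by
  obtain ⟨h0, h1⟩ := floor_bounds hp x
  rw [perMap_of_mem hp G (x, y) _ h0 h1,
    perMap_of_mem hp G (x + p, y) (⌊x / p⌋ + 1) (by push_cast; linarith) (by push_cast; linarith)]
  have : ((x + p, y) : ℝ × ℝ) - (((⌊x / p⌋ + 1 : ℤ) : ℝ) * p, 0) = (x, y) - (⌊x / p⌋ * p, 0) := by
    ext <;> simp; ring
  rw [this, add_assoc]
  congr 1
  ext <;> simp; ring

lemma euclDist_le (a b : ℝ × ℝ) : euclDist a b ≤ |a.1 - b.1| + |a.2 - b.2| := by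
  unfold euclDist
  apply Real.sqrt_le_iff.2
  refine ⟨by positivity, ?_⟩
  nlinarith [sq_abs (a.1 - b.1), sq_abs (a.2 - b.2), abs_nonneg (a.1 - b.1),
    abs_nonneg (a.2 - b.2), mul_nonneg (abs_nonneg (a.1 - b.1)) (abs_nonneg (a.2 - b.2))]

lemma phi_continuous {φ : ℝ × ℝ → ℝ}
    (hφ : ∀ a b : ℝ × ℝ, |φ a - φ b| ≤ euclDist a b) : Continuous φ := by
  have : LipschitzWith 2 φ := by
    apply LipschitzWith.of_dist_le_mul
    intro a b
    have h1 := (hφ a b).trans (euclDist_le a b)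
    have h2 : |a.1 - b.1| ≤ dist a b := by
      rw [Prod.dist_eq, ← Real.dist_eq]; exact le_max_left _ _
    have h3 : |a.2 - b.2| ≤ dist a b := by
      rw [Prod.dist_eq, ← Real.dist_eq]; exact le_max_right _ _
    rw [Real.dist_eq]
    simp only [NNReal.coe_ofNat]
    linarith
  exact this.continuous

lemma g_lip {φ : ℝ × ℝ → ℝ}
    (hφ : ∀ a b : ℝ × ℝ, |φ a - φ b| ≤ euclDist a b) (s s' : ℝ) :
    |(∫ t in (0 : ℝ)..1, φ (t, s)) - ∫ t in (0 : ℝ)..1, φ (t, s')| ≤ |s - s'| := by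
  have hc := phi_continuous hφ
  rw [← intervalIntegral.integral_sub (Continuous.intervalIntegrable (by fun_prop) _ _)
    (Continuous.intervalIntegrable (by fun_prop) _ _)]
  have := intervalIntegral.norm_integral_le_of_norm_le_const (a := (0 : ℝ)) (b := 1)
    (f := fun t => φ (t, s) - φ (t, s')) (C := |s - s'|) (fun t _ => by
      have := (hφ (t, s) (t, s')).trans (euclDist_le _ _)
      simpa using this)
  simpa using this

lemma g_cont {φ : ℝ × ℝ → ℝ}
    (hφ : ∀ a b : ℝ × ℝ, |φ a - φ b| ≤ euclDist a b) : Continuous fun s => ∫ t in (0 : ℝ)..1, φ (t, s) := by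
  have : LipschitzWith 1 fun s => ∫ t in (0 : ℝ)..1, φ (t, s) := by
    apply LipschitzWith.of_dist_le_mul
    intro a b
    simpa [Real.dist_eq] using g_lip hφ a b
  exact this.continuous

lemma lemmaA {φ : ℝ × ℝ → ℝ}
    (hφ : ∀ a b : ℝ × ℝ, |φ a - φ b| ≤ euclDist a b) 
    (hper : ∀ x s : ℝ, φ (x + 1, s) = φ (x, s)) {H : ℝ × ℝ → ℝ × ℝ} (hH : Continuous H) {Q : ℕ} (hQ : 1 ≤ Q)
    (hHp : ∀ x y : ℝ, H (x + 1 / Q, y) = H (x, y) + ((1 / Q : ℝ), (0 : ℝ)))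
    (hH1 : ∀ x y : ℝ, H (x + 1, y) = H (x, y) + ((1 : ℝ), (0 : ℝ))) (y : ℝ) :
    |(∫ t in (0 : ℝ)..1, φ (H (t, y))) -
      ∫ t in (0 : ℝ)..1, ∫ s in (0 : ℝ)..1, φ (s, (H (t, y)).2)| ≤ 1 / Q := by
  have hc := phi_continuous hφ
  have hQ0 : (0 : ℝ) < Q := by exact_mod_cast hQ
  have hp : (0 : ℝ) < 1 / Q := by positivity
  obtain ⟨I, hI⟩ : ∃ I : ℝ → ℝ, I = fun a => ∫ t in (0 : ℝ)..1, φ (H (t, y) + (a, 0)) := ⟨_, rfl⟩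
  have hIper : Function.Periodic I (1 / Q) := by
    intro a
    have hψ : Function.Periodic (fun t => φ (H (t, y) + (a, 0))) 1 := by
      intro t
      simp only
      rw [hH1]
      refine Eq.trans ?_ (hper (H (t, y) + (a, 0)).1 (H (t, y) + (a, 0)).2)
      congr 1
      ext <;> simp; ring
    have h1 : I (a + 1 / Q) = ∫ t in (0 : ℝ)..1, (fun t => φ (H (t, y) + (a, 0))) (t + 1 / Q) := by
      rw [hI]
      simp only
      congr 1
      ext t
      rw [hHp]
      congr 1
      ext <;> simp; ring
    rw [h1, intervalIntegral.integral_comp_add_right (fun t => φ (H (t, y) + (a, 0)))]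
    have h2 := hψ.intervalIntegral_add_eq (0 + 1 / (Q : ℝ)) 0
    rw [hI]
    simp only [zero_add] at h2 ⊢
    rw [add_comm (1 : ℝ)]
    exact h2
  have hsmall : ∀ a, |I a - I 0| ≤ 1 / Q := by
    intro a
    obtain ⟨r, hr, hra⟩ := hIper.exists_mem_Ico₀ hp a
    rw [hra, hI]
    simp only
    rw [← intervalIntegral.integral_sub (Continuous.intervalIntegrable (by fun_prop) _ _)
      (Continuous.intervalIntegrable (by fun_prop) _ _)]
    have := intervalIntegral.norm_integral_le_of_norm_le_const (a := (0 : ℝ)) (b := 1)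
      (f := fun t => φ (H (t, y) + (r, 0)) - φ (H (t, y) + (0, 0))) (C := 1 / Q) (fun t _ => by
        have := (hφ (H (t, y) + (r, 0)) (H (t, y) + (0, 0))).trans (euclDist_le _ _)
        simp only [Prod.fst_add, Prod.snd_add, add_zero, add_sub_cancel_left, sub_self,
          abs_zero, abs_of_nonneg hr.1] at this
        rw [Real.norm_eq_abs]
        linarith [hr.2])
    simpa using this
  have hIc : Continuous I := by
    rw [hI]
    apply intervalIntegral.continuous_parametric_intervalIntegral_of_continuous'
    fun_prop
  have hswap : ∫ t in (0 : ℝ)..1, ∫ s in (0 : ℝ)..1, φ (s, (H (t, y)).2) =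
      ∫ a in (0 : ℝ)..1, I a := by
    rw [hI]
    simp only
    rw [intervalIntegral_intervalIntegral_swap (F := fun a t => φ (H (t, y) + (a, 0)))]
    · congr 1
      ext t
      have hψ : Function.Periodic (fun s => φ (s, (H (t, y)).2)) 1 := fun s => hper _ _
      have h2 := hψ.intervalIntegral_add_eq (H (t, y)).1 0
      have h3 := intervalIntegral.integral_comp_add_right (a := 0) (b := 1)
        (fun s => φ (s, (H (t, y)).2)) (H (t, y)).1
      simp only [zero_add] at h2 h3
      rw [← h2, add_comm _ (1 : ℝ), ← h3]
      congr 1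
      ext s
      congr 1
      ext <;> simp; ring
    · have hcc : Continuous (Function.uncurry fun a t => φ (H (t, y) + (a, 0))) := by
        unfold Function.uncurry
        fun_prop
      refine (hcc.continuousOn.integrableOn_compact
        (isCompact_uIcc.prod isCompact_uIcc)).mono_set (t := uIcc 0 1 ×ˢ uIcc 0 1) ?_
      exact prod_mono uIoc_subset_uIcc uIoc_subset_uIcc
  have h0 : ∫ t in (0 : ℝ)..1, φ (H (t, y)) = I 0 := by
    rw [hI]
    simp only [Prod.mk_zero_zero, add_zero]
  rw [h0, hswap, abs_sub_comm]
  have h1 : (∫ a in (0 : ℝ)..1, I a) - I 0 = ∫ a in (0 : ℝ)..1, (I a - I 0) := by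
    rw [intervalIntegral.integral_sub (hIc.intervalIntegrable _ _) (by simp)]
    simp
  rw [h1]
  have := intervalIntegral.norm_integral_le_of_norm_le_const (a := (0 : ℝ)) (b := 1)
    (f := fun a => I a - I 0) (C := 1 / Q) (fun t _ => hsmall t)
  simpa using this

lemma lemmaB {k : ℝ → ℝ} (hk : Continuous k) {Q : ℕ} (hQ : 1 ≤ Q)
    (hper : Function.Periodic k (1 / Q)) :
    ∫ t in (0 : ℝ)..1, k t = (1 / 2) * ∫ c in (-1 : ℝ)..1, k (1 / Q * (c + 1) / 2) := by
  have hQ0 : (0 : ℝ) < Q := by exact_mod_cast hQ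
  have h1 := hper.intervalIntegral_add_zsmul_eq Q 0 (fun a b => hk.intervalIntegrable a b)
  have h2 := intervalIntegral.integral_comp_mul_add (a := -1) (b := 1) (c := 1 / (2 * (Q : ℝ))) k
    (by positivity) (1 / (2 * (Q : ℝ)))
  have e1 : 1 / (2 * (Q : ℝ)) * (-1) + 1 / (2 * (Q : ℝ)) = 0 := by ring
  have e2 : 1 / (2 * (Q : ℝ)) * 1 + 1 / (2 * (Q : ℝ)) = 1 / Q := by field_simp; ring
  rw [e1, e2] at h2
  have e3 : ∀ c : ℝ, 1 / (Q : ℝ) * (c + 1) / 2 = 1 / (2 * (Q : ℝ)) * c + 1 / (2 * (Q : ℝ)) := by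
    intro c; field_simp
  simp_rw [e3]
  rw [h2]
  have e4 : (0 : ℝ) + (Q : ℤ) • (1 / (Q : ℝ)) = 1 := by simp; field_simp
  rw [e4, zero_add] at h1
  rw [h1]
  simp
  ring

/-- the ideal height reached in the column at parameter `c` -/
noncomputable def ideal (y c : ℝ) : ℝ := if c < y then c + 1 - y else c - 1 - y

lemma lemmaD {g : ℝ → ℝ} (hg : Continuous g) {y : ℝ} (hy : y ∈ Icc (-1 : ℝ) 1) :
    IntervalIntegrable (fun c => g (ideal y c)) volume (-1) 1 ∧
    ∫ c in (-1 : ℝ)..1, g (ideal y c) = ∫ s in (-1 : ℝ)..1, g s := by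
  have hae : ∀ᵐ c : ℝ, c ≠ y := by
    simp [ae_iff]
  have c1 : Continuous fun c => g (c + 1 - y) := by fun_prop
  have c2 : Continuous fun c => g (c - 1 - y) := by fun_prop
  have e1 : ∀ᵐ c : ℝ, c ∈ uIoc (-1) y → g (c + 1 - y) = g (ideal y c) := by
    filter_upwards [hae] with c hc hm
    rw [uIoc_of_le hy.1] at hm
    rw [ideal, if_pos (lt_of_le_of_ne hm.2 hc)]
  have e2 : ∀ᵐ c : ℝ, c ∈ uIoc y 1 → g (c - 1 - y) = g (ideal y c) := by
    filter_upwards with c hm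
    rw [uIoc_of_le hy.2] at hm
    rw [ideal, if_neg (not_lt.2 hm.1.le)]
  have i1 : IntervalIntegrable (fun c => g (ideal y c)) volume (-1) y :=
    (c1.intervalIntegrable _ _).congr_ae
      ((ae_restrict_iff' measurableSet_uIoc).2 e1)
  have i2 : IntervalIntegrable (fun c => g (ideal y c)) volume y 1 :=
    (c2.intervalIntegrable _ _).congr_ae
      ((ae_restrict_iff' measurableSet_uIoc).2 e2)
  refine ⟨i1.trans i2, ?_⟩
  rw [← intervalIntegral.integral_add_adjacent_intervals i1 i2,
    ← intervalIntegral.integral_congr_ae e1, ← intervalIntegral.integral_congr_ae e2]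
  have s1 := intervalIntegral.integral_comp_add_right (a := -1) (b := y) g (1 - y)
  have s2 := intervalIntegral.integral_comp_add_right (a := y) (b := 1) g (-1 - y)
  have t1 : ∀ c : ℝ, c + 1 - y = c + (1 - y) := fun c => by ring
  have t2 : ∀ c : ℝ, c - 1 - y = c + (-1 - y) := fun c => by ring
  simp_rw [t1, t2]
  rw [s1, s2, add_comm]
  have u1 : y + (-1 - y) = -1 := by ring
  have u2 : 1 + (-1 - y) = -1 + (1 - y) := by ring
  have u3 : y + (1 - y) = 1 := by ring
  rw [u1, u2, u3, intervalIntegral.integral_add_adjacent_intervals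
    (hg.intervalIntegrable _ _) (hg.intervalIntegrable _ _)]

lemma ideal_mem {y c : ℝ} (hy : y ∈ Icc (-1 : ℝ) 1) (hc : c ∈ Icc (-1 : ℝ) 1) :
    ideal y c ∈ Icc (-1 : ℝ) 1 := by
  unfold ideal
  obtain ⟨h1, h2⟩ := hy
  obtain ⟨h3, h4⟩ := hc
  split_ifs with h
  · constructor <;> linarith
  · constructor <;> linarith

lemma lemmaC {g k : ℝ → ℝ} (hg : ∀ s s', |g s - g s'| ≤ |s - s'|) (hgc : Continuous g)
    (hk : Continuous k) {y : ℝ} (hy : y ∈ Icc (-1 : ℝ) 1)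
    (hk1 : ∀ c ∈ Icc (-1 : ℝ) 1, k c ∈ Icc (-1 : ℝ) 1) {Bad : Set ℝ} (hB : MeasurableSet Bad)
    {d v : ℝ} (hd : 0 ≤ d) (hv : 0 ≤ v) (hBv : volume Bad ≤ ENNReal.ofReal v)
    (hgood : ∀ c ∈ Icc (-1 : ℝ) 1, c ∉ Bad → |k c - ideal y c| ≤ d) :
    |(1 / 2) * (∫ c in (-1 : ℝ)..1, g (k c)) - (1 / 2) * ∫ s in (-1 : ℝ)..1, g s| ≤ d + v := by
  obtain ⟨hi, he⟩ := lemmaD hgc hy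
  rw [← he, ← mul_sub, ← intervalIntegral.integral_sub
    ((show Continuous fun c => g (k c) from hgc.comp hk).intervalIntegrable _ _) hi, abs_mul]
  have hBfin : volume Bad ≠ ⊤ := (hBv.trans_lt ENNReal.ofReal_lt_top).ne
  have hind : Integrable (Bad.indicator (fun _ => (2 : ℝ))) :=
    (integrable_indicator_iff hB).2 (integrableOn_const hBfin)
  have hb : ‖∫ c in (-1 : ℝ)..1, (g (k c) - g (ideal y c))‖ ≤
      ∫ c in (-1 : ℝ)..1, (d + Bad.indicator (fun _ => (2 : ℝ)) c) := by
    apply intervalIntegral.norm_integral_le_of_norm_le (by norm_num)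
    · filter_upwards with c hc
      have hc' : c ∈ Icc (-1 : ℝ) 1 := Ioc_subset_Icc_self hc
      rw [Real.norm_eq_abs]
      refine (hg _ _).trans ?_
      by_cases hcB : c ∈ Bad
      · rw [indicator_of_mem hcB]
        obtain ⟨a1, a2⟩ := hk1 c hc'
        obtain ⟨a3, a4⟩ := ideal_mem hy hc'
        rw [abs_le]; constructor <;> linarith
      · rw [indicator_of_notMem hcB, add_zero]
        exact hgood c hc' hcB
    · exact (intervalIntegrable_const).add hind.intervalIntegrable
  rw [intervalIntegral.integral_add intervalIntegrable_const hind.intervalIntegrable] at hb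
  have h2 : ∫ c in (-1 : ℝ)..1, Bad.indicator (fun _ => (2 : ℝ)) c ≤ 2 * v := by
    rw [intervalIntegral.integral_of_le (by norm_num)]
    refine (setIntegral_le_integral hind ?_).trans ?_
    · filter_upwards with c
      exact indicator_nonneg (fun _ _ => by norm_num) c
    · rw [integral_indicator hB, setIntegral_const, smul_eq_mul, mul_comm]
      have : volume.real Bad ≤ v := ENNReal.toReal_le_of_le_ofReal hv hBv
      linarith
  simp only [intervalIntegral.integral_const, smul_eq_mul] at hb
  rw [Real.norm_eq_abs] at hb
  rw [abs_of_pos (by norm_num : (0 : ℝ) < 1 / 2)]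
  linarith

lemma core (ε : ℝ) (hε : 0 < ε) (Q : ℕ) (hQ : 1 ≤ Q) (hQε : 1 / (Q : ℝ) ≤ ε / 3) :
    ∃ H : Equiv.Perm (ℝ × ℝ), Nice H ∧
      (∀ x y : ℝ, H (x + 1 / Q, y) = H (x, y) + ((1 / Q : ℝ), (0 : ℝ))) ∧
      (∃ δ > 0, ∀ x y : ℝ, 1 - δ ≤ |y| → H (x, y) = (x, y)) ∧
      ((∀ x y : ℝ, H (x + 1, y) = H (x, y) + ((1 : ℝ), (0 : ℝ))) →
      ∀ y ∈ Set.Icc (-1 + ε) (1 - ε), ∀ φ : ℝ × ℝ → ℝ,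
        (∀ a b : ℝ × ℝ, |φ a - φ b| ≤ euclDist a b) →
        (∀ x s : ℝ, φ (x + 1, s) = φ (x, s)) →
        |(∫ t in (0 : ℝ)..1, φ (H (t, y))) -
            (1 / 2) * ∫ s in (-1 : ℝ)..1, ∫ t in (0 : ℝ)..1, φ (t, s)| ≤ ε) := by
  have hQ0 : (0 : ℝ) < Q := by exact_mod_cast hQ
  obtain ⟨p, hpd⟩ : ∃ p : ℝ, p = 1 / Q := ⟨_, rfl⟩
  have hp : 0 < p := by rw [hpd]; positivity
  obtain ⟨η, hη, hη1, hηε⟩ : ∃ η : ℝ, 0 < η ∧ η < 1 ∧ 6 * η ≤ ε / 3 :=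
    ⟨min (ε / 18) (1 / 2), by positivity, (min_le_right _ _).trans_lt (by norm_num), by
      have := min_le_left (ε / 18) (1 / 2); linarith⟩
  obtain ⟨M, hM⟩ := exists_nat_gt (24 / ε)
  have hM0 : (0 : ℝ) < M := lt_trans (by positivity) hM
  have hM1 : 1 ≤ M := by exact_mod_cast hM0
  have hM1' : (1 : ℝ) ≤ M := by exact_mod_cast hM1
  have hMε : 8 / (M : ℝ) ≤ ε / 3 := by
    rw [div_lt_iff₀ hε] at hM
    rw [div_le_iff₀ hM0]; linarith
  obtain ⟨G, hG, ⟨ρ, hρ, hs⟩, hr⟩ := exists_columns hp hη hη1 hM1 M hM1 le_rfl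
  have hMp : (M : ℝ) * (p / M) = p := by field_simp
  have hpM : 0 < p / M := by positivity
  rw [hMp] at hs
  obtain ⟨H, hH, hHG⟩ := exists_periodic (ρ := min ρ p) hp (lt_min hρ hp) (min_le_right _ _) hG
    (fun x y h => hs x y (by
      have := min_le_left ρ p
      rcases h with h | h
      · left; linarith
      · right; left; linarith))
  have hid : ∀ x y : ℝ, 1 - ρ ≤ |y| → H (x, y) = (x, y) := by
    intro x y h
    rw [hHG, perMap]
    have e : ((x, y) : ℝ × ℝ) - ((⌊x / p⌋ : ℝ) * p, 0) = (x - (⌊x / p⌋ : ℝ) * p, y) := by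
      ext <;> simp
    simp only
    rw [e, hs _ _ (Or.inr (Or.inr h))]
    ext <;> simp
  refine ⟨H, hH, ?_, ⟨ρ, hρ, hid⟩, ?_⟩
  · intro x y
    rw [← hpd, hHG]; exact perMap_add hp G x y
  intro hH1 y hy φ hφ hper
  have hHp : ∀ x y : ℝ, H (x + 1 / Q, y) = H (x, y) + ((1 / Q : ℝ), (0 : ℝ)) := by
    intro x y
    rw [← hpd, hHG]; exact perMap_add hp G x y
  have hHc := hH.cd.continuous
  have hA := lemmaA hφ hper hHc hQ hHp hH1 y
  obtain ⟨g, hgd⟩ : ∃ g : ℝ → ℝ, g = fun s => ∫ t in (0 : ℝ)..1, φ (t, s) := ⟨_, rfl⟩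
  have hgc : Continuous g := by rw [hgd]; exact g_cont hφ
  have hgl : ∀ s s', |g s - g s'| ≤ |s - s'| := by rw [hgd]; exact g_lip hφ
  have hgs : ∀ s, ∫ t in (0 : ℝ)..1, φ (t, s) = g s := fun s => by rw [hgd]
  simp_rw [hgs] at hA ⊢
  have hB := lemmaB (k := fun t => g (H (t, y)).2) (by fun_prop) hQ (by
    intro t
    beta_reduce
    rw [hHp]; simp)
  beta_reduce at hB
  rw [hB] at hA
  have hy1 : y ∈ Icc (-1 : ℝ) 1 := ⟨by linarith [hy.1], by linarith [hy.2]⟩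
  obtain ⟨Bad, hBd⟩ : ∃ Bad : Set ℝ, Bad = (Icc (y - (2 / M + η)) (y + (2 / M + η)) ∪
    Icc (-1) (-1 + 2 / (M : ℝ))) ∪ ⋃ j ∈ Finset.range (M + 1),
      Icc (-1 + 2 * (j : ℝ) / M - η / M) (-1 + 2 * (j : ℝ) / M + η / M) := ⟨_, rfl⟩
  have hBm : MeasurableSet Bad := by
    rw [hBd]
    refine (measurableSet_Icc.union measurableSet_Icc).union ?_
    exact Finset.measurableSet_biUnion _ (fun _ _ => measurableSet_Icc)
  have hBv : volume Bad ≤ ENNReal.ofReal (6 / M + 6 * η) := by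
    have h1 : volume (⋃ j ∈ Finset.range (M + 1),
        Icc (-1 + 2 * (j : ℝ) / M - η / M) (-1 + 2 * (j : ℝ) / M + η / M)) ≤
        ENNReal.ofReal (4 * η) := by
      refine (measure_biUnion_finset_le _ _).trans ?_
      have : ∀ j ∈ Finset.range (M + 1), volume
          (Icc (-1 + 2 * (j : ℝ) / M - η / M) (-1 + 2 * (j : ℝ) / M + η / M)) =
          ENNReal.ofReal (2 * η / M) := by
        intro j _
        rw [Real.volume_Icc]
        congr 1; ring
      rw [Finset.sum_congr rfl this, Finset.sum_const, Finset.card_range, nsmul_eq_mul,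
        ← ENNReal.ofReal_natCast, ← ENNReal.ofReal_mul (by positivity)]
      apply ENNReal.ofReal_le_ofReal
      push_cast
      rw [mul_div_assoc', div_le_iff₀ hM0]
      nlinarith
    rw [hBd]
    refine (measure_union_le _ _).trans ((add_le_add (measure_union_le _ _) h1).trans ?_)
    rw [Real.volume_Icc, Real.volume_Icc, ← ENNReal.ofReal_add (by
        have : 0 < 2 / (M : ℝ) := by positivity
        linarith) (by
        have : 0 < 2 / (M : ℝ) := by positivity
        linarith), ← ENNReal.ofReal_add (by
        have : 0 < 2 / (M : ℝ) := by positivity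
        linarith) (by positivity)]
    apply ENNReal.ofReal_le_ofReal
    have : 6 / (M : ℝ) = 3 * (2 / M) := by ring
    rw [this]
    linarith
  have hC := lemmaC (g := g) (k := fun c => (H (1 / Q * (c + 1) / 2, y)).2) hgl hgc
    (by fun_prop) hy1 ?_ hBm (d := 2 / M) (v := 6 / M + 6 * η) (by positivity) (by positivity)
    hBv ?_
  · beta_reduce at hC
    have e : 2 / (M : ℝ) + 6 / M = 8 / M := by ring
    rw [abs_le] at hA hC ⊢
    constructor <;> linarith [hA.1, hA.2, hC.1, hC.2]
  · intro c _
    beta_reduce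
    rw [mem_Icc, ← abs_le]
    by_contra! hcon
    set z := ((1 / Q * (c + 1) / 2, y) : ℝ × ℝ) with hz
    have h1 : H (H z) = H z := hid (H z).1 (H z).2 (by linarith)
    have h2 := H.injective h1
    rw [h2] at hcon
    have h3 : |y| ≤ 1 := abs_le.2 hy1
    simp only [hz] at hcon
    linarith
  · intro c hc hcB
    rw [hBd] at hcB
    simp only [mem_union, not_or, mem_iUnion, not_exists, mem_Icc, not_and, not_le,
      Finset.mem_range] at hcB
    obtain ⟨⟨b1, b2⟩, b3⟩ := hcB
    have b2' := b2 hc.1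
    obtain ⟨u, hu⟩ : ∃ u : ℝ, u = (c + 1) * M / 2 := ⟨_, rfl⟩
    have hcu : c = -1 + 2 * u / M := by rw [hu]; field_simp; ring
    have hu1 : 1 < u := by
      rw [hcu] at b2'
      have : 2 / (M : ℝ) < 2 * u / M := by linarith
      rw [div_lt_div_iff_of_pos_right hM0] at this
      linarith
    have huM : u ≤ M := by
      rw [hu]; nlinarith [hc.2]
    have hf0 := Nat.floor_le (by linarith : (0 : ℝ) ≤ u)
    have hf1 := Nat.lt_floor_add_one u
    obtain ⟨j, hj⟩ : ∃ j, j = ⌊u⌋₊ := ⟨_, rfl⟩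
    rw [← hj] at hf0 hf1
    have hj1 : 1 ≤ j := by rw [hj]; exact Nat.le_floor (by simpa using hu1.le)
    have hjM : j ≤ M := by exact_mod_cast hf0.trans huM
    -- margins
    have key : ∀ i : ℕ, i < M + 1 → u < i - η / 2 ∨ i + η / 2 < u := by
      intro i hi
      by_contra! hcon
      have h1 : -1 + 2 * (i : ℝ) / M - η / M ≤ c := by
        rw [hcu]
        have : (2 * (i : ℝ) - η) / M ≤ 2 * u / M := by gcongr; linarith
        rw [sub_div] at this; linarith
      have h2 := b3 i hi h1
      rw [hcu] at h2
      have : 2 * u / M ≤ (2 * (i : ℝ) + η) / M := by gcongr; linarith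
      rw [add_div] at this; linarith
    have kj : j + η / 2 < u := by
      rcases key j (by omega) with h | h
      · linarith
      · exact h
    have hjM' : j < M := by
      rcases Nat.lt_or_ge j M with h | h
      · exact h
      · have : (M : ℝ) ≤ j := by exact_mod_cast h
        linarith
    have kj1 : u < j + 1 - η / 2 := by
      rcases key (j + 1) (by omega) with h | h
      · push_cast at h; exact h
      · push_cast at h; linarith
    have ht : 1 / (Q : ℝ) * (c + 1) / 2 = p * u / M := by
      rw [hcu, hpd]; field_simp; ring
    have htp : p * u / M < p := by
      rw [div_lt_iff₀ hM0]
      have : (j : ℝ) + 1 ≤ M := by exact_mod_cast hjM'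
      nlinarith
    have hHe : H (p * u / M, y) = G (p * u / M, y) := by
      rw [hHG, perMap_of_mem hp G _ 0 (by simp; positivity) (by simpa using htp)]
      simp
    have hx : |p * u / M - (j * (p / M) + p / M / 2)| ≤ (1 - η) * (p / M / 2) := by
      have : p * u / M - (j * (p / M) + p / M / 2) = (p / M) * (u - j - 1 / 2) := by ring
      rw [this, abs_mul, abs_of_pos hpM]
      have h3 : |u - j - 1 / 2| ≤ (1 - η) / 2 := by
        rw [abs_le]; constructor <;> linarith
      calc p / M * |u - j - 1 / 2| ≤ p / M * ((1 - η) / 2) := by gcongr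
        _ = _ := by ring
    obtain ⟨r1, r2⟩ := hr j hj1 hjM' _ y hx (by linarith [hy.1]) (by linarith [hy.2])
    have hcj : c - 2 / M ≤ -1 + 2 * j / M ∧ -1 + 2 * (j : ℝ) / M ≤ c := by
      rw [hcu]
      constructor
      · have : 2 * u / M ≤ (2 * (j : ℝ) + 2) / M := by gcongr; linarith
        rw [add_div] at this; linarith
      · have : 2 * (j : ℝ) / M ≤ 2 * u / M := by gcongr
        linarith
    have hM2 : 0 < 2 / (M : ℝ) := by positivity
    beta_reduce
    rw [ht, hHe]
    rcases lt_or_ge c (y - (2 / M + η)) with hcy | hcy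
    · rw [r2 (by linarith), ideal, if_pos (by linarith)]
      simp only
      rw [abs_le]; constructor <;> linarith
    · have hcy' := b1 hcy
      rw [r1 (by linarith), ideal, if_neg (by linarith)]
      simp only
      rw [abs_le]; constructor <;> linarith

lemma iterate_shift {H : ℝ × ℝ → ℝ × ℝ} {p : ℝ}
    (h : ∀ x y : ℝ, H (x + p, y) = H (x, y) + (p, (0 : ℝ))) (n : ℕ) (x y : ℝ) :
    H (x + n * p, y) = H (x, y) + ((n : ℝ) * p, (0 : ℝ)) := by
  induction n with
  | zero => simp
  | succ n ih =>
    have e : x + ((n + 1 : ℕ) : ℝ) * p = x + n * p + p := by push_cast; ring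
    rw [e, h, ih, add_assoc]
    congr 1
    ext <;> simp; ring

end helpers

/-- **Lemma 3.1.** For every `q ≥ 1` and `ε > 0` there is a `C^∞` symplectomorphism `H` of the
cylinder (given by its lift `H : ℝ² → ℝ²`, periodic in the sense `H(x+1/q,y) = H(x,y)+(1/q,0)`),
preserving Lebesgue measure, equal to the identity near the boundary `|y| = 1`, commuting with
the rotation `R_{1/q}`, and sending the uniform measure on each horizontal circle at height
`y ∈ [−1+ε, 1−ε]` to a measure `ε`-close to the normalized area measure in the Kantorovich
distance (tested on 1-periodic 1-Lipschitz functions). -/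
theorem cylinder_equidistribution_lemma (q : ℕ) (hq : 1 ≤ q) (ε : ℝ) (hε : 0 < ε) :
    ∃ H : ℝ × ℝ ≃ ℝ × ℝ,
      ContDiff ℝ (⊤ : ℕ∞) ⇑H ∧ ContDiff ℝ (⊤ : ℕ∞) ⇑H.symm ∧
      MeasurePreserving H volume volume ∧
      (∀ x y : ℝ, H (x + 1 / q, y) = H (x, y) + ((1 / q : ℝ), (0 : ℝ))) ∧
      (∃ δ > 0, ∀ x y : ℝ, 1 - δ ≤ |y| → H (x, y) = (x, y)) ∧
      ∀ y ∈ Set.Icc (-1 + ε) (1 - ε), ∀ φ : ℝ × ℝ → ℝ,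
        (∀ a b : ℝ × ℝ, |φ a - φ b| ≤ euclDist a b) →
        (∀ x s : ℝ, φ (x + 1, s) = φ (x, s)) →
        |(∫ t in (0 : ℝ)..1, φ (H (t, y))) -
            (1 / 2) * ∫ s in (-1 : ℝ)..1, ∫ t in (0 : ℝ)..1, φ (t, s)| ≤ ε := by
  obtain ⟨L, hL⟩ := exists_nat_gt (3 / ε)
  have hL0 : (0 : ℝ) < L := lt_trans (by positivity) hL
  have hL1 : 1 ≤ L := by exact_mod_cast hL0
  have hq0 : (0 : ℝ) < q := by exact_mod_cast hq
  have hq1 : (1 : ℝ) ≤ q := by exact_mod_cast hq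
  have hQ : 1 ≤ L * q := Nat.mul_pos hL1 hq
  obtain ⟨H, hH, hHp, hid, hest⟩ := core ε hε (L * q) hQ (by
    rw [div_lt_iff₀ hε] at hL
    push_cast
    rw [div_le_iff₀ (by positivity)]
    have : (L : ℝ) * 1 ≤ L * q := by gcongr
    nlinarith)
  refine ⟨H, hH.cd, hH.cds, hH.measurePreserving, ?_, hid, hest ?_⟩
  · intro x y
    have := iterate_shift hHp L x y
    have e : (L : ℝ) * (1 / ((L * q : ℕ) : ℝ)) = 1 / q := by
      push_cast; field_simp
    rwa [e] at this
  · intro x y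
    have := iterate_shift hHp (L * q) x y
    have e : ((L * q : ℕ) : ℝ) * (1 / ((L * q : ℕ) : ℝ)) = 1 := by
      push_cast; field_simp
    rwa [e] at this
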